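/- arXiv:1704.04671 — 5 statements merged into one kernel-verified Lean document; each statement's English description precedes it below -/
import Mathlib

section
/- Fix K ≥ 1 and 1 ≤ i < n. Let Inc_i denote the multiset {R(j,i) : 1 ≤ j ≤ i} of scores of incomplete windows ending at frame i. Then topK(K, Inc_{i+1}) = topK(K, {f^s(i+1)} + map (x ↦ x + f^m(i+1)) (topK(K, Inc_i))); that is, the K best incomplete-window scores ending at frame i+1 are obtained by adding f^m(i+1) to each of the K best incomplete-window scores ending at frame i, inserting the new value f^s(i+1), and keeping the K largest resulting values. (Lemma 1 of the paper.) -/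
/-- `topK K S` is the multiset of the `min(K, |S|)` largest elements of `S`:
sort `S` in ascending order and keep the last `min(K, |S|)` elements. -/
noncomputable def topK (K : ℕ) (S : Multiset ℝ) : Multiset ℝ :=
  ((S.sort (· ≤ ·)).drop (Multiset.card S - K) : List ℝ)

/-- Incomplete-window score: `R fs fm j i = f^s(j) + ∑_{q=j+1}^{i} f^m(q)`. -/
def R (fs fm : ℕ → ℝ) (j i : ℕ) : ℝ :=
  fs j + ∑ q ∈ Finset.Icc (j + 1) i, fm q

/-- `Inc fs fm i` is the multiset `{R(j,i) : 1 ≤ j ≤ i}` of scores of the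
incomplete windows ending at frame `i`. -/
def Inc (fs fm : ℕ → ℝ) (i : ℕ) : Multiset ℝ :=
  (Finset.Icc 1 i).val.map (fun j => R fs fm j i)

theorem topK_unique (K : ℕ) (T U : Multiset ℝ) (h : ∀ t ∈ T, ∀ u ∈ U, u ≤ t)
    (hc : Multiset.card T = min K (Multiset.card (T + U))) : topK K (T + U) = T := by
  have hs : (T + U).sort (· ≤ ·) = U.sort (· ≤ ·) ++ T.sort (· ≤ ·) := by
    apply List.Perm.eq_of_pairwise' (r := (· ≤ ·))
    · exact Multiset.pairwise_sort _ _
    · rw [List.pairwise_append]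
      refine ⟨Multiset.pairwise_sort _ _, Multiset.pairwise_sort _ _, ?_⟩
      intro a ha b hb
      exact h b (by simpa using hb) a (by simpa using ha)
    · rw [← Multiset.coe_eq_coe, ← Multiset.coe_add]
      simp [add_comm]
  have hl : Multiset.card (T + U) - K = (U.sort (· ≤ ·)).length := by
    simp only [Multiset.length_sort, Multiset.card_add] at *
    omega
  unfold topK
  rw [hs, hl, List.drop_left]
  simp

theorem topK_spec (K : ℕ) (S : Multiset ℝ) : ∃ U : Multiset ℝ, S = topK K S + U ∧
    (∀ t ∈ topK K S, ∀ u ∈ U, u ≤ t) ∧ Multiset.card (topK K S) = min K (Multiset.card S) := by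
  refine ⟨((S.sort (· ≤ ·)).take (Multiset.card S - K) : List ℝ), ?_, ?_, ?_⟩
  · unfold topK
    rw [add_comm, Multiset.coe_add, List.take_append_drop]
    simp
  · intro t ht u hu
    have hp := Multiset.pairwise_sort S (· ≤ ·)
    rw [← List.take_append_drop (Multiset.card S - K) (S.sort (· ≤ ·)),
      List.pairwise_append] at hp
    exact hp.2.2 u (by simpa using hu) t (by simpa [topK] using ht)
  · simp only [topK, Multiset.coe_card, List.length_drop, Multiset.length_sort]
    omega

theorem topK_cons_aux (K : ℕ) (a : ℝ) (T U : Multiset ℝ) (h : ∀ t ∈ T, ∀ u ∈ U, u ≤ t)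
    (hc : Multiset.card T = min K (Multiset.card (T + U))) :
    topK K (a ::ₘ (T + U)) = topK K (a ::ₘ T) := by
  obtain ⟨V, hV, hle, hcard⟩ := topK_spec K (a ::ₘ T)
  generalize topK K (a ::ₘ T) = W at *
  have e : a ::ₘ (T + U) = W + (V + U) := by
    rw [← Multiset.cons_add, hV, add_assoc]
  have hcV := congrArg Multiset.card hV
  simp only [Multiset.card_add, Multiset.card_cons] at hcV hc hcard
  rw [e]
  apply topK_unique
  · intro w hw u hu
    rcases Multiset.mem_add.1 hu with hu1 | hu2
    · exact hle w hw u hu1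
    · have hUpos : 0 < Multiset.card U := Multiset.card_pos_iff_exists_mem.2 ⟨u, hu2⟩
      have hV1 : Multiset.card V = 1 := by omega
      obtain ⟨v, rfl⟩ := Multiset.card_eq_one.1 hV1
      have hv : v ∈ a ::ₘ T := by rw [hV]; simp
      rcases Multiset.mem_cons.1 hv with rfl | hv
      · have : T = W := by
          rw [add_comm, Multiset.singleton_add] at hV
          exact (Multiset.cons_inj_right _).1 hV
        exact h w (this ▸ hw) u hu2
      · exact (h v hv u hu2).trans (hle w hw v (by simp))
  · simp only [Multiset.card_add]
    omega

theorem Inc_succ (fs fm : ℕ → ℝ) (i : ℕ) : Inc fs fm (i + 1) =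
    fs (i + 1) ::ₘ (Inc fs fm i).map (fun x => x + fm (i + 1)) := by
  unfold Inc
  rw [← Finset.insert_Icc_right_eq_Icc_add_one (by omega : 1 ≤ i + 1),
    Finset.insert_val_of_notMem (by simp), Multiset.map_cons, Multiset.map_map]
  congr 1
  · simp [R]
  · apply Multiset.map_congr rfl
    intro j hj
    have hj : j ≤ i := (Finset.mem_Icc.1 hj).2
    simp only [R, Function.comp]
    rw [Finset.sum_Icc_succ_top (by omega), add_assoc]

/-- Lemma 1: the K best incomplete-window scores ending at frame `i+1` are
obtained by adding `f^m(i+1)` to each of the K best incomplete-window scores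
ending at frame `i`, inserting the new value `f^s(i+1)`, and keeping the K
largest resulting values. -/
theorem topK_inc_step (n K i : ℕ) (hK : 1 ≤ K) (hi : 1 ≤ i) (hin : i < n)
    (fs fm : ℕ → ℝ) :
    topK K (Inc fs fm (i + 1)) =
      topK K (fs (i + 1) ::ₘ (topK K (Inc fs fm i)).map (fun x => x + fm (i + 1))) := by
  rw [Inc_succ]
  obtain ⟨U, hU, hle, hcard⟩ := topK_spec K (Inc fs fm i)
  generalize topK K (Inc fs fm i) = T at *
  rw [hU, Multiset.map_add]
  apply topK_cons_aux
  · intro t ht u hu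
    obtain ⟨t', ht', rfl⟩ := Multiset.mem_map.1 ht
    obtain ⟨u', hu', rfl⟩ := Multiset.mem_map.1 hu
    have := hle t' ht' u' hu'
    linarith
  · rw [← Multiset.map_add, Multiset.card_map, Multiset.card_map, ← hU, hcard]
end

section
/- For every K ∈ ℕ, every finite multiset S of reals, and every real a: topK(K, {a} + S) = topK(K, {a} + topK(K, S)); that is, the K largest elements of S together with a newly inserted element a can be computed from only the K largest elements of S together with a. -/
theorem drop_orderedInsert_aux (a : ℝ) : ∀ (m : ℕ) (l : List ℝ), l.Pairwise (· ≤ ·) →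
    (l.orderedInsert (· ≤ ·) a).drop (m + 1)
      = ((l.drop m).orderedInsert (· ≤ ·) a).drop 1
  | 0, l, _ => by simp
  | m + 1, [], _ => by simp
  | m + 1, b :: l, h => by
    rw [List.pairwise_cons] at h
    by_cases hab : a ≤ b
    · have h2 : (l.drop m).orderedInsert (· ≤ ·) a = a :: l.drop m := by
        cases hd : l.drop m with
        | nil => simp
        | cons c t =>
          have hc : c ∈ l := List.mem_of_mem_drop (i := m) (by rw [hd]; simp)
          have : a ≤ c := hab.trans (h.1 c hc)
          simp [List.orderedInsert, this]
      rw [List.drop_succ_cons, h2]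
      simp [List.orderedInsert, hab]
    · have ih := drop_orderedInsert_aux a m l h.2
      rw [List.drop_succ_cons, ← ih]
      simp [List.orderedInsert, hab]

theorem sort_cons_aux (a : ℝ) (l : List ℝ) (h : l.Pairwise (· ≤ ·)) :
    Multiset.sort (a ::ₘ (l : Multiset ℝ)) (· ≤ ·) = l.orderedInsert (· ≤ ·) a := by
  apply List.Perm.eq_of_pairwise' (r := (· ≤ ·))
  · exact Multiset.pairwise_sort _ _
  · exact h.orderedInsert a l
  · rw [← Multiset.coe_eq_coe, Multiset.sort_eq, Multiset.cons_coe, Multiset.coe_eq_coe]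
    exact (List.perm_orderedInsert _ a l).symm

/-- The K largest elements of `S` with a newly inserted element `a` can be
computed from only the K largest elements of `S` together with `a`. -/
theorem topK_cons (K : ℕ) (S : Multiset ℝ) (a : ℝ) :
    topK K (a ::ₘ S) = topK K (a ::ₘ topK K S) := by
  obtain ⟨l, hl, rfl⟩ : ∃ l : List ℝ, l.Pairwise (· ≤ ·) ∧ (l : Multiset ℝ) = S :=
    ⟨S.sort (· ≤ ·), Multiset.pairwise_sort _ _, Multiset.sort_eq _ _⟩
  have hs : Multiset.sort (l : Multiset ℝ) (· ≤ ·) = l := by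
    apply List.Perm.eq_of_pairwise' (r := (· ≤ ·)) (Multiset.pairwise_sort _ _) hl
    rw [← Multiset.coe_eq_coe, Multiset.sort_eq]
  have ht : topK K (l : Multiset ℝ) = (l.drop (l.length - K) : List ℝ) := by
    simp only [topK, hs, Multiset.coe_card]
  have hd : (l.drop (l.length - K)).Pairwise (· ≤ ·) := hl.sublist (List.drop_sublist _ _)
  rw [ht]
  unfold topK
  rw [sort_cons_aux a l hl, sort_cons_aux a _ hd]
  simp only [Multiset.card_cons, Multiset.coe_card, List.length_drop]
  rcases lt_or_ge l.length K with h | h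
  · have : l.length - K = 0 := by omega
    simp [this]
  · have e1 : l.length + 1 - K = (l.length - K) + 1 := by omega
    have e2 : l.length - (l.length - K) + 1 - K = 1 := by omega
    rw [e1, e2, drop_orderedInsert_aux a _ l hl]
end

section
/- Define R̂ : {1,…,n} → ℝ recursively by R̂(1) = f^s(1) and R̂(i+1) = max(f^s(i+1), R̂(i) + f^m(i+1)) for 1 ≤ i < n. Then for every 1 ≤ i ≤ n, R̂(i) = max over 1 ≤ j ≤ i of R(j,i), i.e., R̂(i) equals the maximum incomplete-window score ending at frame i. (The K = 1 invariant of the Structured Maximal Sums algorithm.) -/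
/-- The K = 1 invariant of the Structured Maximal Sums algorithm: the
recursively defined `R̂` with `R̂(1) = f^s(1)` and
`R̂(i+1) = max(f^s(i+1), R̂(i) + f^m(i+1))` equals, at each `1 ≤ i ≤ n`, the
maximum incomplete-window score `max_{1 ≤ j ≤ i} R(j,i)`. -/
theorem rhat_eq_max_incomplete (n : ℕ) (hn : 1 ≤ n) (fs fm : ℕ → ℝ)
    (Rhat : ℕ → ℝ) (h1 : Rhat 1 = fs 1)
    (hstep : ∀ i, 1 ≤ i → i < n →
      Rhat (i + 1) = max (fs (i + 1)) (Rhat i + fm (i + 1))) :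
    ∀ i, ∀ hi : 1 ≤ i, i ≤ n →
      Rhat i = (Finset.Icc 1 i).sup' (Finset.nonempty_Icc.mpr hi)
        (fun j => R fs fm j i) := by
  have hself : ∀ i, R fs fm i i = fs i := by
    intro i
    simp [R]
  have hsucc : ∀ j i, j ≤ i → R fs fm j (i + 1) = R fs fm j i + fm (i + 1) := by
    intro j i hji
    unfold R
    rw [Finset.sum_Icc_succ_top (by omega), add_assoc]
  intro i hi
  induction i, hi using Nat.le_induction with
  | base =>
    intro _
    simp [h1, hself]
  | succ i hi ih =>
    intro hin
    have ih' := ih (by omega)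
    rw [hstep i hi (by omega)]
    apply le_antisymm
    · apply max_le
      · rw [← hself (i + 1)]
        exact Finset.le_sup' (fun j => R fs fm j (i + 1)) (by simp)
      · obtain ⟨j, hj, hjeq⟩ := Finset.exists_mem_eq_sup' (Finset.nonempty_Icc.mpr hi)
          (fun j => R fs fm j i)
        rw [ih', hjeq]
        rw [Finset.mem_Icc] at hj
        show R fs fm j i + fm (i + 1) ≤ _
        rw [← hsucc j i hj.2]
        exact Finset.le_sup' (fun j => R fs fm j (i + 1))
          (Finset.mem_Icc.mpr ⟨hj.1, by omega⟩)
    · apply Finset.sup'_le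
      intro j hj
      rw [Finset.mem_Icc] at hj
      rcases Nat.lt_or_ge i j with h | h
      · have : j = i + 1 := by omega
        subst this
        rw [hself]
        exact le_max_left _ _
      · rw [hsucc j i h]
        apply le_max_of_le_right
        rw [ih']
        have := Finset.le_sup' (fun j => R fs fm j i) (Finset.mem_Icc.mpr ⟨hj.1, h⟩)
        exact add_le_add_left this _
end

section
/- Let y_gt ⊆ {1,…,n} be the set of frames of a fixed ground-truth window. For p ∈ {s, m, e}, define modified framewise scores f̃^p(t) = f^p(t) + 1 if t ∉ y_gt and f̃^p(t) = f^p(t) − 1 if t ∈ y_gt, and let F̃(s,e) be the structured score computed from f̃^s, f̃^m, f̃^e. Then for every temporal window y = (s, e), writing y also for its frame set {s, s+1, …, e}: Δ(y_gt, y) + F(s,e) = |y_gt| + F̃(s,e). That is, the loss-augmented confidence equals a constant plus the structured score under the modified framewise scores. -/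
/-- Structured score of the temporal window `(s, e)`:
`F(s,e) = f^s(s) + ∑_{t=s+1}^{e-1} f^m(t) + f^e(e)`. -/
def Fscore (fs fm fe : ℕ → ℝ) (s e : ℕ) : ℝ :=
  fs s + ∑ t ∈ Finset.Icc (s + 1) (e - 1), fm t + fe e

/-- Overlap penalty between two windows viewed as sets of frames:
`Δ(y, ȳ) = |y ∪ ȳ| − |y ∩ ȳ|`. -/
def delta (y ybar : Finset ℕ) : ℝ :=
  ((y ∪ ybar).card : ℝ) - ((y ∩ ybar).card : ℝ)

/-- Modified framewise score: `f̃(t) = f(t) − 1` if `t` is in the ground-truth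
window and `f̃(t) = f(t) + 1` otherwise. -/
def modifyScore (ygt : Finset ℕ) (f : ℕ → ℝ) : ℕ → ℝ :=
  fun t => if t ∈ ygt then f t - 1 else f t + 1

/-- For every temporal window `(s, e)` the loss-augmented confidence
`Δ(y_gt, y) + F(s,e)` equals the constant `|y_gt|` plus the structured score
computed from the modified framewise scores. -/
theorem loss_augmented_eq_modified (n : ℕ) (fs fm fe : ℕ → ℝ)
    (ygt : Finset ℕ) (hgt : ygt ⊆ Finset.Icc 1 n)
    (s e : ℕ) (hs : 1 ≤ s) (hse : s < e) (he : e ≤ n) :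
    delta ygt (Finset.Icc s e) + Fscore fs fm fe s e =
      (ygt.card : ℝ) +
        Fscore (modifyScore ygt fs) (modifyScore ygt fm) (modifyScore ygt fe) s e := by
  have hm : ∀ f : ℕ → ℝ, ∀ t,
      modifyScore ygt f t = f t + (1 - 2 * (if t ∈ ygt then (1 : ℝ) else 0)) := by
    intro f t
    unfold modifyScore
    split_ifs <;> ring
  have hIcc : Finset.Icc s e = insert s (insert e (Finset.Icc (s + 1) (e - 1))) := by
    ext t
    simp only [Finset.mem_Icc, Finset.mem_insert]
    omega
  have hsplit : ∀ g : ℕ → ℝ, ∑ t ∈ Finset.Icc s e, g t =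
      g s + ∑ t ∈ Finset.Icc (s + 1) (e - 1), g t + g e := by
    intro g
    rw [hIcc, Finset.sum_insert, Finset.sum_insert]
    · ring
    · simp only [Finset.mem_Icc]
      omega
    · simp only [Finset.mem_Icc, Finset.mem_insert]
      omega
  have hg := hsplit (fun t => 1 - 2 * (if t ∈ ygt then (1 : ℝ) else 0))
  have hcard : ∑ t ∈ Finset.Icc s e, (1 - 2 * (if t ∈ ygt then (1 : ℝ) else 0)) =
      ((Finset.Icc s e).card : ℝ) - 2 * ((ygt ∩ Finset.Icc s e).card : ℝ) := by
    rw [Finset.sum_sub_distrib, ← Finset.mul_sum, Finset.sum_boole, Finset.filter_mem_eq_inter,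
      Finset.inter_comm]
    simp
  have hu : ((ygt ∪ Finset.Icc s e).card : ℝ) + ((ygt ∩ Finset.Icc s e).card : ℝ) =
      (ygt.card : ℝ) + ((Finset.Icc s e).card : ℝ) := by
    exact_mod_cast Finset.card_union_add_card_inter ygt (Finset.Icc s e)
  rw [hcard] at hg
  unfold delta Fscore
  simp only [hm]
  rw [Finset.sum_add_distrib]
  linarith
end

section
/- Let y_gt ⊆ {1,…,n} be the set of frames of a fixed ground-truth window, and let f̃^p (p ∈ {s,m,e}) and F̃ be the modified scores and modified structured score defined by f̃^p(t) = f^p(t) + 1 if t ∉ y_gt and f̃^p(t) = f^p(t) − 1 if t ∈ y_gt. Then, provided n ≥ 2, max over temporal windows y = (s,e) of (Δ(y_gt, y) + F(s,e)) = |y_gt| + max over temporal windows (s,e) of F̃(s,e), and a window (s,e) maximizes Δ(y_gt, ·) + F(·) if and only if it maximizes F̃(·). Hence loss-augmented inference reduces to a structured maximal sum computation on the modified scores. -/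
/-- The signed indicator used to modify the scores. -/
def signInd (ygt : Finset ℕ) (t : ℕ) : ℝ := if t ∈ ygt then -1 else 1

lemma modifyScore_eq (ygt : Finset ℕ) (f : ℕ → ℝ) (t : ℕ) :
    modifyScore ygt f t = f t + signInd ygt t := by
  unfold modifyScore signInd
  split_ifs <;> ring

lemma delta_eq (y B : Finset ℕ) :
    delta y B = (y.card : ℝ) + ∑ t ∈ B, signInd y t := by
  have h1 : ((y ∪ B).card : ℝ) + ((y ∩ B).card : ℝ) = y.card + B.card := by
    exact_mod_cast Finset.card_union_add_card_inter y B
  have h2 : ∑ t ∈ B, signInd y t = (B.card : ℝ) - 2 * ((y ∩ B).card : ℝ) := by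
    have h3 : ∀ t ∈ B, signInd y t = 1 - 2 * (if t ∈ y then (1 : ℝ) else 0) := by
      intro t _
      unfold signInd
      split_ifs <;> norm_num
    rw [Finset.sum_congr rfl h3, Finset.sum_sub_distrib, ← Finset.mul_sum,
      Finset.sum_boole, Finset.filter_mem_eq_inter, Finset.inter_comm]
    simp
  unfold delta
  linarith

lemma sum_Icc_split (c : ℕ → ℝ) (s e : ℕ) (h : s < e) :
    ∑ t ∈ Finset.Icc s e, c t = c s + ∑ t ∈ Finset.Icc (s + 1) (e - 1), c t + c e := by
  have h1 : Finset.Icc s e = insert s (insert e (Finset.Icc (s + 1) (e - 1))) := by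
    ext t
    simp only [Finset.mem_insert, Finset.mem_Icc]
    omega
  rw [h1, Finset.sum_insert, Finset.sum_insert]
  · ring
  · simp only [Finset.mem_Icc]
    omega
  · simp only [Finset.mem_insert, Finset.mem_Icc]
    omega

lemma key_identity (ygt : Finset ℕ) (fs fm fe : ℕ → ℝ) (s e : ℕ) (h : s < e) :
    delta ygt (Finset.Icc s e) + Fscore fs fm fe s e = (ygt.card : ℝ) +
      Fscore (modifyScore ygt fs) (modifyScore ygt fm) (modifyScore ygt fe) s e := by
  rw [delta_eq, sum_Icc_split _ s e h]
  unfold Fscore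
  simp only [modifyScore_eq, Finset.sum_add_distrib]
  ring

/-- Loss-augmented inference reduces to a structured maximal sum computation
on the modified scores: the maximum over windows of `Δ(y_gt, ·) + F(·)`
equals `|y_gt|` plus the maximum of the modified structured score `F̃`, and a
window maximizes `Δ(y_gt, ·) + F(·)` iff it maximizes `F̃`. -/
theorem loss_augmented_inference (n : ℕ) (hn : 2 ≤ n) (fs fm fe : ℕ → ℝ)
    (ygt : Finset ℕ) (hgt : ygt ⊆ Finset.Icc 1 n) :
    (((Finset.Icc 1 n) ×ˢ (Finset.Icc 1 n)).filter (fun p => p.1 < p.2)).sup'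
        (by
          refine ⟨(1, 2), ?_⟩
          simp only [Finset.mem_filter, Finset.mem_product, Finset.mem_Icc]
          omega)
        (fun p => delta ygt (Finset.Icc p.1 p.2) + Fscore fs fm fe p.1 p.2) =
      (ygt.card : ℝ) +
        (((Finset.Icc 1 n) ×ˢ (Finset.Icc 1 n)).filter (fun p => p.1 < p.2)).sup'
          (by
            refine ⟨(1, 2), ?_⟩
            simp only [Finset.mem_filter, Finset.mem_product, Finset.mem_Icc]
            omega)
          (fun p =>
            Fscore (modifyScore ygt fs) (modifyScore ygt fm) (modifyScore ygt fe)
              p.1 p.2) ∧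
    ∀ p ∈ ((Finset.Icc 1 n) ×ˢ (Finset.Icc 1 n)).filter (fun p => p.1 < p.2),
      ((∀ q ∈ ((Finset.Icc 1 n) ×ˢ (Finset.Icc 1 n)).filter (fun p => p.1 < p.2),
          delta ygt (Finset.Icc q.1 q.2) + Fscore fs fm fe q.1 q.2 ≤
            delta ygt (Finset.Icc p.1 p.2) + Fscore fs fm fe p.1 p.2) ↔
        (∀ q ∈ ((Finset.Icc 1 n) ×ˢ (Finset.Icc 1 n)).filter (fun p => p.1 < p.2),
          Fscore (modifyScore ygt fs) (modifyScore ygt fm) (modifyScore ygt fe)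
              q.1 q.2 ≤
            Fscore (modifyScore ygt fs) (modifyScore ygt fm) (modifyScore ygt fe)
              p.1 p.2)) := by
  have key : ∀ p ∈ ((Finset.Icc 1 n) ×ˢ (Finset.Icc 1 n)).filter (fun p => p.1 < p.2),
      delta ygt (Finset.Icc p.1 p.2) + Fscore fs fm fe p.1 p.2 = (ygt.card : ℝ) +
        Fscore (modifyScore ygt fs) (modifyScore ygt fm) (modifyScore ygt fe) p.1 p.2 :=
    fun p hp => key_identity ygt fs fm fe p.1 p.2 (Finset.mem_filter.mp hp).2
  constructor
  · apply le_antisymm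
    · apply Finset.sup'_le
      intro p hp
      rw [key p hp]
      gcongr
      exact Finset.le_sup' (fun p : ℕ × ℕ => Fscore (modifyScore ygt fs)
        (modifyScore ygt fm) (modifyScore ygt fe) p.1 p.2) hp
    · rw [← le_sub_iff_add_le']
      apply Finset.sup'_le
      intro p hp
      rw [le_sub_iff_add_le', ← key p hp]
      exact Finset.le_sup' (fun p : ℕ × ℕ => delta ygt (Finset.Icc p.1 p.2) +
        Fscore fs fm fe p.1 p.2) hp
  · intro p hp
    refine forall₂_congr fun q hq => ?_
    rw [key p hp, key q hq, add_le_add_iff_left]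
end
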